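/- Let K be a field and R = K[x,y,z]. Let I be the ideal generated by the monomials x⁴, x³y, x²z, x²y², x²yz, xy³, xy²z, xz³, y³, y²z², yz³, z⁵, and let M = (x, y, z). Then x·y²·z ∉ I·M, while (x·y²·z)² ∈ (I·M)²; consequently x·y²·z satisfies the integral dependence equation T² − (xy²z)² = 0 with (xy²z)² ∈ (I·M)², so x·y²·z lies in the integral closure of I·M and the ideal I·M is not integrally closed. -/

import Mathlib

/-- An element `f` is integral over an ideal `J` if it satisfies an equation
`f^m + c₁ f^(m-1) + ⋯ + c_m = 0` with `m ≥ 1` and `c_i ∈ J^i` for each `i`. -/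
def IsIntegralOverIdeal {R : Type} [CommRing R] (J : Ideal R) (f : R) : Prop :=
  ∃ m : ℕ, 0 < m ∧ ∃ c : ℕ → R, (∀ i, 1 ≤ i → i ≤ m → c i ∈ J ^ i) ∧
    f ^ m + ∑ i ∈ Finset.Icc 1 m, c i * f ^ (m - i) = 0

/-- An ideal is integrally closed (complete) if it contains every element integral
over it. -/
def IdealIntegrallyClosed {R : Type} [CommRing R] (J : Ideal R) : Prop :=
  ∀ f : R, IsIntegralOverIdeal J f → f ∈ J

/-! A monomial `m` lies in the product of a monomial ideal and the ideal of the variables only if it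
is a proper multiple of one of the generating monomials. No proper divisor of `xy²z` is a generator
of `I`, so `xy²z ∉ I·M`. On the other hand `(xy²z)² = (x²z · z)(y³ · y)`, and both factors
lie in `I·M`. -/

theorem isIntegralOverIdeal_of_pow_mem {R : Type} [CommRing R] {J : Ideal R} {f : R} {n : ℕ}
    (hn : 0 < n) (hf : f ^ n ∈ J ^ n) : IsIntegralOverIdeal J f := by
  refine ⟨n, hn, Pi.single n (-f ^ n), fun i _ _ => ?_, ?_⟩
  · obtain rfl | hi := eq_or_ne i n
    · simpa using hf
    · simp [Pi.single_eq_of_ne hi]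
  · rw [Finset.sum_eq_single_of_mem n (Finset.mem_Icc.2 ⟨hn, le_rfl⟩)
      fun i _ hi => by simp [Pi.single_eq_of_ne hi]]
    simp

theorem finsupp_lt_iff_exists_add_single_le {σ : Type*} {d e : σ →₀ ℕ} :
    d < e ↔ ∃ i, d + Finsupp.single i 1 ≤ e := by
  constructor
  · intro hde
    obtain ⟨hle, i, hi⟩ := Pi.lt_def.1 (Finsupp.coe_lt_coe.2 hde)
    refine ⟨i, fun j => ?_⟩
    obtain rfl | hj := eq_or_ne j i
    · simpa using hi
    · simpa [Finsupp.single_eq_of_ne hj] using hle j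
  · rintro ⟨i, hi⟩
    exact (lt_add_of_pos_right d (by simp [pos_iff_ne_zero])).trans_le hi

section MonomialIdeals

open MvPolynomial Pointwise

variable {σ K : Type*} [CommSemiring K]

theorem monomial_mem_span_monomial_iff [Nontrivial K] {S : Set (σ →₀ ℕ)} {e : σ →₀ ℕ} :
    monomial e (1 : K) ∈ Ideal.span ((monomial · (1 : K)) '' S) ↔ ∃ d ∈ S, d ≤ e := by
  classical
  simp [mem_ideal_span_monomial_image, support_monomial]

theorem span_monomial_mul_span_monomial (S T : Set (σ →₀ ℕ)) :
    Ideal.span ((monomial · (1 : K)) '' S) * Ideal.span ((monomial · (1 : K)) '' T) =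
      Ideal.span ((monomial · (1 : K)) '' (S + T)) := by
  rw [Ideal.span_mul_span', ← Set.image2_mul, ← Set.image2_add, Set.image_image2,
    Set.image2_image_left, Set.image2_image_right]
  simp only [monomial_mul, mul_one]

theorem idealOfVars_eq_span_monomial :
    idealOfVars σ K =
      Ideal.span ((monomial · (1 : K)) '' Set.range fun i => Finsupp.single i 1) := by
  rw [← Set.range_comp]
  rfl

theorem monomial_mem_span_monomial_mul_idealOfVars_iff [Nontrivial K] {S : Set (σ →₀ ℕ)}
    {e : σ →₀ ℕ} :
    monomial e (1 : K) ∈ Ideal.span ((monomial · (1 : K)) '' S) * idealOfVars σ K ↔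
      ∃ d ∈ S, d < e := by
  simp only [idealOfVars_eq_span_monomial, span_monomial_mul_span_monomial,
    monomial_mem_span_monomial_iff, Set.mem_add, finsupp_lt_iff_exists_add_single_le]
  simp

theorem idealOfVars_fin_three :
    idealOfVars (Fin 3) K = Ideal.span {X 0, X 1, X 2} := by
  have hrange : Set.range (X : Fin 3 → MvPolynomial (Fin 3) K) = {X 0, X 1, X 2} := by
    ext p
    simp [Fin.exists_fin_succ, eq_comm]
  rw [idealOfVars, hrange]

theorem monomial_fin_three (a b c : ℕ) :
    monomial (Finsupp.equivFunOnFinite.symm ![a, b, c]) (1 : K) = X 0 ^ a * X 1 ^ b * X 2 ^ c := by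
  rw [monomial_eq, Finsupp.prod_fintype _ _ fun _ => pow_zero _]
  simp [Fin.prod_univ_three]

end MonomialIdeals

section TostonIdeal

open MvPolynomial

/-- The exponent vectors `![a, b, c]` of the generators `xᵃyᵇzᶜ` of Tostón's ideal `I`, as functions
rather than finitely supported functions so that comparisons between them are decidable by
evaluation. -/
def tostonExponents : Finset (Fin 3 → ℕ) :=
  {![4, 0, 0], ![3, 1, 0], ![2, 0, 1], ![2, 2, 0], ![2, 1, 1], ![1, 3, 0], ![1, 2, 1], ![1, 0, 3],
    ![0, 3, 0], ![0, 2, 2], ![0, 1, 3], ![0, 0, 5]}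

/-- Tostón's ideal `I`, presented as a monomial ideal over an arbitrary coefficient ring. -/
noncomputable def tostonIdeal (K : Type*) [CommSemiring K] : Ideal (MvPolynomial (Fin 3) K) :=
  Ideal.span ((monomial · 1) '' (Finsupp.equivFunOnFinite.symm '' (tostonExponents : Set _)))

theorem not_lt_of_mem_tostonExponents : ∀ d ∈ tostonExponents, ¬ d < ![1, 2, 1] := by
  simp only [Pi.lt_def, Pi.le_def]
  decide

variable (K : Type*) [CommSemiring K]

theorem tostonIdeal_eq_span :
    tostonIdeal K = Ideal.span {X 0 ^ 4, X 0 ^ 3 * X 1, X 0 ^ 2 * X 2, X 0 ^ 2 * X 1 ^ 2,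
      X 0 ^ 2 * X 1 * X 2, X 0 * X 1 ^ 3, X 0 * X 1 ^ 2 * X 2, X 0 * X 2 ^ 3, X 1 ^ 3,
      X 1 ^ 2 * X 2 ^ 2, X 1 * X 2 ^ 3, X 2 ^ 5} := by
  simp [tostonIdeal, tostonExponents, Set.image_insert_eq, monomial_fin_three]

theorem xy2z_notMem_tostonIdeal_mul_idealOfVars [Nontrivial K] :
    X 0 * X 1 ^ 2 * X 2 ∉ tostonIdeal K * idealOfVars (Fin 3) K := by
  have hmonomial := monomial_fin_three (K := K) 1 2 1
  simp only [pow_one] at hmonomial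
  rw [← hmonomial, tostonIdeal, monomial_mem_span_monomial_mul_idealOfVars_iff]
  rintro ⟨_, ⟨d, hd, rfl⟩, hlt⟩
  exact not_lt_of_mem_tostonExponents d hd (Finsupp.coe_lt_coe.2 hlt)

theorem xy2z_sq_mem_tostonIdeal_mul_idealOfVars_sq :
    (X 0 * X 1 ^ 2 * X 2) ^ 2 ∈ (tostonIdeal K * idealOfVars (Fin 3) K) ^ 2 := by
  have hx2z : X 0 ^ 2 * X 2 ∈ tostonIdeal K := by
    rw [tostonIdeal_eq_span]
    exact Ideal.subset_span (by simp)
  have hy3 : X 1 ^ 3 ∈ tostonIdeal K := by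
    rw [tostonIdeal_eq_span]
    exact Ideal.subset_span (by simp)
  have hX (i : Fin 3) : X i ∈ idealOfVars (Fin 3) K := Ideal.subset_span (Set.mem_range_self i)
  have hfactor : (X 0 * X 1 ^ 2 * X 2 : MvPolynomial (Fin 3) K) ^ 2 =
      (X 0 ^ 2 * X 2 * X 2) * (X 1 ^ 3 * X 1) := by ring
  rw [hfactor, pow_two (tostonIdeal K * idealOfVars (Fin 3) K)]
  exact Ideal.mul_mem_mul (Ideal.mul_mem_mul hx2z (hX 2)) (Ideal.mul_mem_mul hy3 (hX 1))

end TostonIdeal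

theorem toston_example_general (K : Type) [CommRing K] [Nontrivial K]
    (x y z : MvPolynomial (Fin 3) K)
    (hx : x = MvPolynomial.X 0) (hy : y = MvPolynomial.X 1) (hz : z = MvPolynomial.X 2)
    (I M : Ideal (MvPolynomial (Fin 3) K))
    (hI : I = Ideal.span {x ^ 4, x ^ 3 * y, x ^ 2 * z, x ^ 2 * y ^ 2, x ^ 2 * y * z,
      x * y ^ 3, x * y ^ 2 * z, x * z ^ 3, y ^ 3, y ^ 2 * z ^ 2, y * z ^ 3, z ^ 5})
    (hM : M = Ideal.span {x, y, z}) :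
    x * y ^ 2 * z ∉ I * M ∧ (x * y ^ 2 * z) ^ 2 ∈ (I * M) ^ 2 ∧
      IsIntegralOverIdeal (I * M) (x * y ^ 2 * z) ∧
      ¬ IdealIntegrallyClosed (I * M) := by
  have hI' : I = tostonIdeal K := by rw [hI, tostonIdeal_eq_span, hx, hy, hz]
  have hM' : M = MvPolynomial.idealOfVars (Fin 3) K := by rw [hM, idealOfVars_fin_three, hx, hy, hz]
  subst hI' hM' hx hy hz
  have hnot_mem := xy2z_notMem_tostonIdeal_mul_idealOfVars K
  have hsq := xy2z_sq_mem_tostonIdeal_mul_idealOfVars_sq K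
  have hintegral := isIntegralOverIdeal_of_pow_mem two_pos hsq
  exact ⟨hnot_mem, hsq, hintegral, fun hclosed => hnot_mem (hclosed _ hintegral)⟩

/-- Tostón's example.  In `R = K[x,y,z]`, with
`I = (x⁴, x³y, x²z, x²y², x²yz, xy³, xy²z, xz³, y³, y²z², yz³, z⁵)` and `M = (x,y,z)`,
one has `xy²z ∉ I·M` while `(xy²z)² ∈ (I·M)²`; consequently `xy²z` is integral over
`I·M` (it satisfies `T² − (xy²z)² = 0` with `(xy²z)² ∈ (I·M)²`), so `I·M` is not
integrally closed. -/
theorem toston_example (K : Type) [Field K]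
    (x y z : MvPolynomial (Fin 3) K)
    (hx : x = MvPolynomial.X 0) (hy : y = MvPolynomial.X 1) (hz : z = MvPolynomial.X 2)
    (I M : Ideal (MvPolynomial (Fin 3) K))
    (hI : I = Ideal.span {x ^ 4, x ^ 3 * y, x ^ 2 * z, x ^ 2 * y ^ 2, x ^ 2 * y * z,
      x * y ^ 3, x * y ^ 2 * z, x * z ^ 3, y ^ 3, y ^ 2 * z ^ 2, y * z ^ 3, z ^ 5})
    (hM : M = Ideal.span {x, y, z}) :
    x * y ^ 2 * z ∉ I * M ∧ (x * y ^ 2 * z) ^ 2 ∈ (I * M) ^ 2 ∧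
      IsIntegralOverIdeal (I * M) (x * y ^ 2 * z) ∧
      ¬ IdealIntegrallyClosed (I * M) :=
  toston_example_general K x y z hx hy hz I M hI hM
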